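/- For every integer t ≥ 81, φ(t) ≥ ⌊(t/3)^{1/3}⌋, and consequently φ(t) ≥ (1/2)·(t/3)^{1/3}. Combined with the upper bound φ(t) ≤ Λ(t), this gives φ(t) = Θ(t^{1/3}). -/

import Mathlib

open Finset Matrix

/-- The sign `[T : e]` of an edge `e` in a triangle `T`. -/
noncomputable def triSign (T e : Finset ℕ) : ℝ :=
  if e ⊆ T ∧ e.card = 2 ∧ T.card = 3 then
    if (T \ e).max = T.max ∨ (T \ e).min = T.min then 1 else -1
  else 0

/-- A triangle family: a nonempty finite set of 3-element subsets of ℕ. -/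
def IsTriFam (F : Finset (Finset ℕ)) : Prop :=
  F.Nonempty ∧ ∀ T ∈ F, T.card = 3

/-- The edges of the support graph of a triangle family. -/
def edgesOf (F : Finset (Finset ℕ)) : Finset (Finset ℕ) :=
  F.biUnion fun T => T.powersetCard 2

/-- The vertices of the support graph of a triangle family. -/
def vertsOf (F : Finset (Finset ℕ)) : Finset ℕ :=
  F.biUnion id

/-- The signed edge-triangle incidence matrix of a triangle family. -/
noncomputable def delta1 (F : Finset (Finset ℕ)) :
    Matrix {T // T ∈ F} {e // e ∈ edgesOf F} ℝ :=
  Matrix.of fun T e => triSign T.1 e.1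

/-- The smallest positive eigenvalue of a matrix. -/
noncomputable def lambdaMinPos {m : Type*} [Fintype m] (M : Matrix m m ℝ) : ℝ :=
  sInf {μ : ℝ | 0 < μ ∧ ∃ v : m → ℝ, v ≠ 0 ∧ M.mulVec v = μ • v}

/-- `λ(𝒯)`: the smallest positive eigenvalue of `δ₁(𝒯)ᵀ δ₁(𝒯)`. -/
noncomputable def lam (F : Finset (Finset ℕ)) : ℝ :=
  lambdaMinPos ((delta1 F)ᵀ * delta1 F)

/-- The neighborhood of `x` in the support graph `Γ₀(F)`. -/
def nbrs (F : Finset (Finset ℕ)) (x : ℕ) : Finset ℕ :=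
  (vertsOf F).filter fun y => x ≠ y ∧ ∃ T ∈ F, x ∈ T ∧ y ∈ T

/-- `φ(t)`: the maximum of `λ(𝒯)` over triangle families with `|𝒯| = t`. -/
noncomputable def phi (t : ℕ) : ℝ :=
  sSup {r : ℝ | ∃ F : Finset (Finset ℕ), IsTriFam F ∧ F.card = t ∧ lam F = r}

/-- `Λ(t) = max_{1 ≤ s ≤ t} φ(s)`. -/
noncomputable def Lam (t : ℕ) : ℝ :=
  sSup {r : ℝ | ∃ s : ℕ, 1 ≤ s ∧ s ≤ t ∧ phi s = r}

/-- `H(n) = min{ s ≥ 1 : φ(C(n,3)+s) > n - 1 }`. -/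
noncomputable def Hfun (n : ℕ) : ℕ :=
  sInf {s : ℕ | 1 ≤ s ∧ (n : ℝ) - 1 < phi (n.choose 3 + s)}

/-- The triangle family `𝒯_{c,b}`: all 3-cliques of `K_c ∨ (b isolated vertices)`. -/
def Tcb (c b : ℕ) : Finset (Finset ℕ) :=
  ((Finset.Icc 1 c).powersetCard 3) ∪
    (Finset.Icc (c+1) (c+b)).biUnion
      (fun i => ((Finset.Icc 1 c).powersetCard 2).image (fun p => insert i p))



lemma block_alg (C B : Finset ℕ) (hd : Disjoint C B) (w : ℕ → ℕ → ℝ) (μ : ℝ) (hμ : 0 < μ)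
    (hw : ∀ x y, w y x = - w x y)
    (h1 : ∀ x ∈ C, ∀ y ∈ C, ∑ z ∈ C ∪ B, (w x y + w y z + w z x) = μ * w x y)
    (h2 : ∀ x ∈ C, ∀ i ∈ B, ∑ z ∈ C, (w x i + w i z + w z x) = μ * w x i)
    (h3 : ∃ x ∈ C, ∃ y ∈ C ∪ B, w x y ≠ 0) : (C.card : ℝ) ≤ μ := by
  have hxx : ∀ x, w x x = 0 := fun x => by have := hw x x; linarith
  have hanti : ∀ (U V : Finset ℕ) (x : ℕ),
      ∑ y ∈ U, ∑ z ∈ V, (w x y + w y z + w z x) = - ∑ y ∈ V, ∑ z ∈ U, (w x y + w y z + w z x) := by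
    intro U V x
    rw [Finset.sum_comm, ← Finset.sum_neg_distrib]
    refine Finset.sum_congr rfl fun y _ => ?_
    rw [← Finset.sum_neg_distrib]
    refine Finset.sum_congr rfl fun z _ => ?_
    rw [hw x y, hw z y, hw z x]; ring
  -- boundary at core vertices
  have hbC : ∀ x ∈ C, ∑ y ∈ C ∪ B, w x y = 0 := by
    intro x hx
    have e1 : μ * ∑ y ∈ C ∪ B, w x y = 0 := by
      rw [Finset.mul_sum, Finset.sum_union hd, ← Finset.sum_congr rfl (h1 x hx),
        ← Finset.sum_congr rfl (h2 x hx)]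
      simp_rw [Finset.sum_union hd]
      rw [Finset.sum_add_distrib]
      have a1 := hanti C C x
      have a2 := hanti C B x
      linarith
    rcases mul_eq_zero.mp e1 with h | h
    · linarith
    · exact h
  have hbB : ∀ i ∈ B, ∑ y ∈ C, w i y = 0 := by
    intro i hi
    have e1 : μ * ∑ y ∈ C, w i y = 0 := by
      rw [Finset.mul_sum]
      have : ∀ y ∈ C, μ * w i y = ∑ z ∈ C, (w i y + w y z + w z i) := by
        intro y hy
        rw [hw y i, mul_neg, ← h2 y hy i hi, ← Finset.sum_neg_distrib]
        refine Finset.sum_congr rfl fun z _ => ?_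
        rw [hw y z, hw z i]; ring
      rw [Finset.sum_congr rfl this]
      have a1 := hanti C C i
      linarith
    rcases mul_eq_zero.mp e1 with h | h
    · linarith
    · exact h
  have hflip : ∀ (U : Finset ℕ) (x : ℕ), ∑ z ∈ U, w z x = - ∑ z ∈ U, w x z := by
    intro U x
    rw [← Finset.sum_neg_distrib]
    exact Finset.sum_congr rfl fun z _ => hw x z
  have hBn : (0 : ℝ) ≤ B.card := Nat.cast_nonneg _
  obtain ⟨x, hx, y, hy, hxy⟩ := h3
  rcases Finset.mem_union.mp hy with hy | hy
  · have := h1 x hx y hy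
    rw [Finset.sum_add_distrib, Finset.sum_add_distrib, hbC y hy, hflip, hbC x hx,
      Finset.sum_const, nsmul_eq_mul, Finset.card_union_of_disjoint hd] at this
    push_cast at this
    have h4 : ((C.card : ℝ) + B.card) = μ := mul_right_cancel₀ hxy (by linarith)
    linarith
  · have key : ∀ i ∈ B, C.card * w x i + ∑ z ∈ B, w x z = μ * w x i := by
      intro i hi
      have := h2 x hx i hi
      have h5 := hbC x hx
      rw [Finset.sum_union hd] at h5
      rw [Finset.sum_add_distrib, Finset.sum_add_distrib, hbB i hi, hflip,
        Finset.sum_const, nsmul_eq_mul] at this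
      linarith
    have hs := Finset.sum_congr rfl key
    rw [Finset.sum_add_distrib, ← Finset.mul_sum, ← Finset.mul_sum, Finset.sum_const,
      nsmul_eq_mul] at hs
    by_cases h0 : ∑ z ∈ B, w x z = 0
    · have := key y hy
      rw [h0] at this
      have h4 : (C.card : ℝ) = μ := mul_right_cancel₀ hxy (by linarith)
      linarith
    · have h4 : ((C.card : ℝ) + B.card) = μ := mul_right_cancel₀ h0 (by linarith)
      linarith


def link (F : Finset (Finset ℕ)) (x y : ℕ) : Finset ℕ :=
  (vertsOf F).filter fun z => z ≠ x ∧ z ≠ y ∧ ({x, y, z} : Finset ℕ) ∈ F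

lemma mem_link {F : Finset (Finset ℕ)} {x y z : ℕ} :
    z ∈ link F x y ↔ z ≠ x ∧ z ≠ y ∧ ({x, y, z} : Finset ℕ) ∈ F := by
  unfold link vertsOf
  rw [Finset.mem_filter, and_iff_right_iff_imp]
  rintro ⟨-, -, h⟩
  rw [Finset.mem_biUnion]
  exact ⟨_, h, by simp⟩

lemma mem_edgesOf {F : Finset (Finset ℕ)} {e : Finset ℕ} :
    e ∈ edgesOf F ↔ ∃ T ∈ F, e ⊆ T ∧ e.card = 2 := by
  simp [edgesOf, Finset.mem_powersetCard]

def Good (c : ℝ) (F : Finset (Finset ℕ)) : Prop :=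
  ∀ μ : ℝ, 0 < μ → ∀ w : ℕ → ℕ → ℝ, (∀ x y, w y x = - w x y) →
    (∀ x y, x ≠ y → ({x, y} : Finset ℕ) ∈ edgesOf F →
      ∑ z ∈ link F x y, (w x y + w y z + w z x) = μ * w x y) →
    (∃ x y, x ≠ y ∧ ({x, y} : Finset ℕ) ∈ edgesOf F ∧ w x y ≠ 0) → c ≤ μ

lemma link_union {F G : Finset (Finset ℕ)} (hd : Disjoint (edgesOf F) (edgesOf G)) {x y : ℕ}
    (hxy : x ≠ y) (he : ({x, y} : Finset ℕ) ∈ edgesOf F) : link (F ∪ G) x y = link F x y := by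
  ext z
  rw [mem_link, mem_link, Finset.mem_union]
  constructor
  · rintro ⟨h1, h2, h3 | h3⟩
    · exact ⟨h1, h2, h3⟩
    · exfalso
      refine Finset.disjoint_left.mp hd he (mem_edgesOf.mpr ⟨_, h3, ?_, Finset.card_pair hxy⟩)
      intro a; simp; tauto
  · rintro ⟨h1, h2, h3⟩
    exact ⟨h1, h2, Or.inl h3⟩

lemma edgesOf_union (F G : Finset (Finset ℕ)) : edgesOf (F ∪ G) = edgesOf F ∪ edgesOf G := by
  ext e; simp only [mem_edgesOf, Finset.mem_union]
  constructor
  · rintro ⟨T, h | h, h'⟩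
    · exact Or.inl ⟨T, h, h'⟩
    · exact Or.inr ⟨T, h, h'⟩
  · rintro (⟨T, h, h'⟩ | ⟨T, h, h'⟩)
    · exact ⟨T, Or.inl h, h'⟩
    · exact ⟨T, Or.inr h, h'⟩

lemma Good.union {c : ℝ} {F G : Finset (Finset ℕ)} (hF : Good c F) (hG : Good c G)
    (hd : Disjoint (edgesOf F) (edgesOf G)) : Good c (F ∪ G) := by
  intro μ hμ w hw heq ⟨x, y, hxy, he, hne⟩
  rw [edgesOf_union] at he heq
  rcases Finset.mem_union.mp he with he | he
  · refine hF μ hμ w hw ?_ ⟨x, y, hxy, he, hne⟩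
    intro a b hab hab'
    rw [← link_union hd hab hab']
    exact heq a b hab (Finset.mem_union_left _ hab')
  · refine hG μ hμ w hw ?_ ⟨x, y, hxy, he, hne⟩
    intro a b hab hab'
    rw [← link_union hd.symm hab hab', Finset.union_comm]
    exact heq a b hab (Finset.mem_union_right _ hab')


def blk (C B : Finset ℕ) : Finset (Finset ℕ) :=
  C.powersetCard 3 ∪ (B ×ˢ C.powersetCard 2).image fun p => insert p.1 p.2

lemma mem_blk {C B T : Finset ℕ} : T ∈ blk C B ↔
    (T ⊆ C ∧ T.card = 3) ∨ ∃ i ∈ B, ∃ p, p ⊆ C ∧ p.card = 2 ∧ insert i p = T := by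
  unfold blk
  simp only [Finset.mem_union, Finset.mem_powersetCard, Finset.mem_image, Finset.mem_product,
    Prod.exists]
  constructor
  · rintro (h | ⟨i, p, ⟨h1, h2, h3⟩, h4⟩)
    · exact Or.inl h
    · exact Or.inr ⟨i, h1, p, h2, h3, h4⟩
  · rintro (h | ⟨i, h1, p, h2, h3, h4⟩)
    · exact Or.inl h
    · exact Or.inr ⟨i, p, ⟨h1, h2, h3⟩, h4⟩

lemma blk_card {C B : Finset ℕ} (hd : Disjoint C B) :
    (blk C B).card = C.card.choose 3 + B.card * C.card.choose 2 := by
  unfold blk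
  rw [Finset.card_union_of_disjoint, Finset.card_image_of_injOn, Finset.card_product,
    Finset.card_powersetCard, Finset.card_powersetCard]
  · rintro ⟨i, p⟩ h ⟨j, q⟩ h' heq
    simp only [Finset.coe_product, Set.mem_prod, Finset.mem_coe, Finset.mem_powersetCard] at h h'
    simp only at heq
    have hi : ∀ i ∈ B, i ∉ C := fun i hi hc => Finset.disjoint_left.mp hd hc hi
    have hij : i = j := by
      have : i ∈ insert j q := heq ▸ Finset.mem_insert_self i p
      rcases Finset.mem_insert.mp this with h1 | h1
      · exact h1
      · exact absurd (h'.2.1 h1) (hi i h.1)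
    subst hij
    have : p = q := by
      rw [← Finset.erase_insert (fun hp => hi i h.1 (h.2.1 hp)), heq,
        Finset.erase_insert (fun hp => hi i h.1 (h'.2.1 hp))]
    rw [this]
  · rw [Finset.disjoint_left]
    intro T hT hT'
    rw [Finset.mem_powersetCard] at hT
    obtain ⟨⟨i, p⟩, h1, h2⟩ := Finset.mem_image.mp hT'
    rw [Finset.mem_product] at h1
    refine Finset.disjoint_left.mp hd (hT.1 ?_) h1.1
    rw [← h2]; exact Finset.mem_insert_self _ _

lemma blk_tri {C B : Finset ℕ} (hd : Disjoint C B) {T : Finset ℕ} (hT : T ∈ blk C B) :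
    T.card = 3 := by
  rcases mem_blk.mp hT with h | ⟨i, hi, p, h1, h2, rfl⟩
  · exact h.2
  · rw [Finset.card_insert_of_notMem (fun hp => Finset.disjoint_left.mp hd (h1 hp) hi), h2]

lemma blk_sub {C B : Finset ℕ} {T : Finset ℕ} (hT : T ∈ blk C B) : T ⊆ C ∪ B := by
  rcases mem_blk.mp hT with h | ⟨i, hi, p, h1, h2, rfl⟩
  · exact h.1.trans Finset.subset_union_left
  · intro a ha
    rcases Finset.mem_insert.mp ha with rfl | ha
    · exact Finset.mem_union_right _ hi
    · exact Finset.mem_union_left _ (h1 ha)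

lemma blk_link_CC {C B : Finset ℕ} (hd : Disjoint C B) {x y : ℕ} (hx : x ∈ C) (hy : y ∈ C)
    (hxy : x ≠ y) : link (blk C B) x y = ((C ∪ B).erase x).erase y := by
  ext z
  rw [mem_link, Finset.mem_erase, Finset.mem_erase]
  constructor
  · rintro ⟨h1, h2, h3⟩
    exact ⟨h2, h1, blk_sub h3 (by simp)⟩
  · rintro ⟨h2, h1, h3⟩
    refine ⟨h1, h2, mem_blk.mpr ?_⟩
    rcases Finset.mem_union.mp h3 with h | h
    · left
      refine ⟨?_, Finset.card_eq_three.mpr ⟨x, y, z, hxy, h1.symm, h2.symm, rfl⟩⟩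
      intro a; simp only [Finset.mem_insert, Finset.mem_singleton]
      rintro (rfl | rfl | rfl) <;> assumption
    · right
      refine ⟨z, h, {x, y}, ?_, Finset.card_pair hxy, ?_⟩
      · intro a; simp only [Finset.mem_insert, Finset.mem_singleton]
        rintro (rfl | rfl) <;> assumption
      · ext a; simp only [Finset.mem_insert, Finset.mem_singleton]; tauto

lemma blk_link_CB {C B : Finset ℕ} (hd : Disjoint C B) {x i : ℕ} (hx : x ∈ C) (hi : i ∈ B) :
    link (blk C B) x i = C.erase x := by
  have hiC : i ∉ C := fun h => Finset.disjoint_left.mp hd h hi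
  ext z
  rw [mem_link, Finset.mem_erase]
  constructor
  · rintro ⟨h1, h2, h3⟩
    refine ⟨h1, ?_⟩
    rcases mem_blk.mp h3 with h | ⟨j, hj, p, h4, h5, h6⟩
    · exact absurd (h.1 (by simp)) hiC
    · have hi' : i ∈ insert j p := by rw [h6]; simp
      have hz' : z ∈ insert j p := by rw [h6]; simp
      have : i = j := by
        rcases Finset.mem_insert.mp hi' with h | h
        · exact h
        · exact absurd (h4 h) hiC
      subst this
      rcases Finset.mem_insert.mp hz' with h | h
      · exact absurd h h2
      · exact h4 h
  · rintro ⟨h1, h3⟩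
    have h2 : z ≠ i := fun h => hiC (h ▸ h3)
    refine ⟨h1, h2, mem_blk.mpr (Or.inr ⟨i, hi, {x, z}, ?_, Finset.card_pair h1.symm, ?_⟩)⟩
    · intro a; simp only [Finset.mem_insert, Finset.mem_singleton]
      rintro (rfl | rfl) <;> assumption
    · ext a; simp only [Finset.mem_insert, Finset.mem_singleton]; tauto

lemma edge_of_link {F : Finset (Finset ℕ)} {x y z : ℕ} (hxy : x ≠ y) (h : z ∈ link F x y) :
    ({x, y} : Finset ℕ) ∈ edgesOf F := by
  refine mem_edgesOf.mpr ⟨_, (mem_link.mp h).2.2, ?_, Finset.card_pair hxy⟩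
  intro a; simp; tauto

lemma blk_good {C B : Finset ℕ} (hd : Disjoint C B) (hC : 3 ≤ C.card) :
    Good C.card (blk C B) := by
  intro μ hμ w hw heq ⟨x, y, hxy, he, hne⟩
  have hxx : ∀ x, w x x = 0 := fun x => by have := hw x x; linarith
  refine block_alg C B hd w μ hμ hw ?_ ?_ ?_
  · intro x hx y hy
    rcases eq_or_ne x y with rfl | hxy
    · rw [hxx, mul_zero]
      refine Finset.sum_eq_zero fun z _ => ?_
      rw [hw x z]; ring
    · obtain ⟨z, hz⟩ : ((C.erase x).erase y).Nonempty := by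
        rw [← Finset.card_pos, Finset.card_erase_of_mem (Finset.mem_erase.mpr ⟨hxy.symm, hy⟩),
          Finset.card_erase_of_mem hx]; omega
      have hl := blk_link_CC hd hx hy hxy
      have hzl : z ∈ link (blk C B) x y := by
        rw [hl]; simp only [Finset.mem_erase, Finset.mem_union] at hz ⊢; tauto
      rw [← heq x y hxy (edge_of_link hxy hzl), hl]
      rw [Finset.sum_erase, Finset.sum_erase]
      · rw [hw x y, hxx]; ring
      · rw [hw x y, hxx]; ring
  · intro x hx i hi
    have hxi : x ≠ i := fun h => Finset.disjoint_left.mp hd hx (h ▸ hi)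
    obtain ⟨z, hz⟩ : (C.erase x).Nonempty := by
        rw [← Finset.card_pos, Finset.card_erase_of_mem hx]; omega
    have hl := blk_link_CB hd hx hi
    have hzl : z ∈ link (blk C B) x i := by rw [hl]; exact hz
    rw [← heq x i hxi (edge_of_link hxi hzl), hl]
    rw [Finset.sum_erase]
    rw [hw x i, hxx]; ring
  · obtain ⟨T, hT, hs, -⟩ := mem_edgesOf.mp he
    have hxT := hs (Finset.mem_insert_self x {y})
    have hyT : y ∈ T := hs (by simp)
    by_cases hxC : x ∈ C
    · exact ⟨x, hxC, y, blk_sub hT hyT, hne⟩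
    · have hyC : y ∈ C := by
        rcases mem_blk.mp hT with h | ⟨i, hi, p, h1, h2, rfl⟩
        · exact h.1 hyT
        · have hxi : x = i := by
            rcases Finset.mem_insert.mp hxT with h | h
            · exact h
            · exact absurd (h1 h) hxC
          rcases Finset.mem_insert.mp hyT with h | h
          · exact absurd (hxi.trans h.symm) hxy
          · exact h1 h
      refine ⟨y, hyC, x, blk_sub hT hxT, ?_⟩
      rw [hw x y]; exact neg_ne_zero.mpr hne


def Rz (c t : ℕ) : Prop := ∀ N : ℕ, ∃ F : Finset (Finset ℕ), IsTriFam F ∧ F.card = t ∧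
  Good c F ∧ ∀ T ∈ F, ∀ x ∈ T, N ≤ x

lemma Rz.add {c s t : ℕ} (hs : Rz c s) (ht : Rz c t) : Rz c (s + t) := by
  intro N
  obtain ⟨F, hF1, hF2, hF3, hF4⟩ := hs N
  obtain ⟨G, hG1, hG2, hG3, hG4⟩ := ht (max N ((vertsOf F).sup id + 1))
  have hdj : ∀ T ∈ F, ∀ U ∈ G, ∀ x ∈ T, x ∉ U := by
    intro T hT U hU x hx hx'
    have h1 := hG4 U hU x hx'
    have h2 : x ≤ (vertsOf F).sup id :=
      Finset.le_sup (f := id) (Finset.mem_biUnion.mpr ⟨T, hT, hx⟩)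
    have := le_max_right N ((vertsOf F).sup id + 1)
    omega
  refine ⟨F ∪ G, ⟨hF1.1.mono Finset.subset_union_left, ?_⟩, ?_, hF3.union hG3 ?_, ?_⟩
  · intro T hT
    rcases Finset.mem_union.mp hT with h | h
    · exact hF1.2 T h
    · exact hG1.2 T h
  · rw [Finset.card_union_of_disjoint, hF2, hG2]
    rw [Finset.disjoint_left]
    intro T hT hT'
    have h3 := hF1.2 T hT
    obtain ⟨x, hx⟩ : T.Nonempty := by rw [← Finset.card_pos]; omega
    exact hdj T hT T hT' x hx hx
  · rw [Finset.disjoint_left]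
    intro e he he'
    obtain ⟨T, hT, h1, h2⟩ := mem_edgesOf.mp he
    obtain ⟨U, hU, h3, -⟩ := mem_edgesOf.mp he'
    obtain ⟨x, hx⟩ : e.Nonempty := by rw [← Finset.card_pos]; omega
    exact hdj T hT U hU x (h1 hx) (h3 hx)
  · intro T hT x hx
    rcases Finset.mem_union.mp hT with h | h
    · exact hF4 T h x hx
    · exact (le_max_left _ _).trans (hG4 T h x hx)

lemma Rz_blk {c n : ℕ} (hn : 3 ≤ n) (hc : c ≤ n) (b : ℕ) :
    Rz c (n.choose 3 + b * n.choose 2) := by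
  intro N
  have hd : Disjoint (Finset.Ico N (N + n)) (Finset.Ico (N + n) (N + n + b)) :=
    Finset.Ico_disjoint_Ico_consecutive _ _ _
  have hcard : (blk (Finset.Ico N (N + n)) (Finset.Ico (N + n) (N + n + b))).card =
      n.choose 3 + b * n.choose 2 := by
    rw [blk_card hd]; simp
  refine ⟨blk (Finset.Ico N (N + n)) (Finset.Ico (N + n) (N + n + b)), ⟨?_, fun T => blk_tri hd⟩,
    hcard, ?_, ?_⟩
  · rw [← Finset.card_pos, hcard]
    have := Nat.choose_pos hn
    omega
  · have := blk_good hd (by simpa using hn)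
    intro μ h1 w h2 h3 h4
    have h5 := this μ h1 w h2 h3 h4
    simp only [Nat.card_Ico, Nat.add_sub_cancel_left] at h5
    exact le_trans (by exact_mod_cast hc) h5
  · intro T hT x hx
    have := blk_sub hT hx
    simp only [Finset.mem_union, Finset.mem_Ico] at this
    omega


lemma numer_even (m R : ℕ) (hRb : 20 * (m+1)^3 ≤ R + (m+1)) : ∃ k y z, y + z ≤ k ∧
    R = k * ((m+1) * (2*m+1)) + y * (2*m+2) + z * (4*m+5) := by
  have hzm : R % (m+1) < m+1 := Nat.mod_lt _ (by omega)
  have hzd := Nat.mod_add_div R (m+1)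
  generalize R % (m+1) = z at *
  generalize R / (m+1) = Q at *
  have hQ : 20 * (m+1)^2 ≤ Q + 2 := by
    have : (m+1) * (20 * (m+1)^2) ≤ (m+1) * (Q + 2) := by nlinarith
    exact Nat.le_of_mul_le_mul_left this (by omega)
  clear hRb
  obtain ⟨S, hS⟩ : ∃ S, Q = S + 4 * z := ⟨Q - 4*z, by
    have : 4 * z ≤ Q := by
      by_contra! hlt
      nlinarith
    omega⟩
  subst hS
  -- S = k (2m+1) + 2 y
  have hym : (S * (m+1)) % (2*m+1) < 2*m+1 := Nat.mod_lt _ (by omega)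
  have hmod : 2 * ((S * (m+1)) % (2*m+1)) ≡ S [MOD (2*m+1)] := by
    have h1 : (S * (m+1)) % (2*m+1) ≡ S * (m+1) [MOD (2*m+1)] := Nat.mod_modEq _ _
    have h2 := h1.mul_left 2
    refine h2.trans ?_
    have : 2 * (S * (m+1)) = S + S * (2*m+1) := by ring
    rw [this]
    simp [Nat.ModEq]
  generalize (S * (m+1)) % (2*m+1) = y at *
  have hSb : (2*m+1) * (3*m) + 4*m ≤ S := by
    by_contra! hlt
    nlinarith
  have hle : 2 * y ≤ S := by nlinarith
  obtain ⟨k, hk⟩ := (Nat.modEq_iff_dvd' hle).mp hmod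
  have hS : S = 2 * y + (2*m+1) * k := by omega
  refine ⟨k, y, z, ?_, ?_⟩
  · have : 3 * m ≤ k := by
      by_contra! hlt
      nlinarith
    omega
  · rw [← hzd, hS]; ring

lemma numer_odd (m R : ℕ) (hRb : 5 * (2*m+3)^3 ≤ 2 * R + (2*m+3)) : ∃ k y z, y + z ≤ k ∧
    R = k * ((2*m+3) * (m+1)) + y * (2*m+3) + z * (4*m+7) := by
  have hzm : R % (2*m+3) < 2*m+3 := Nat.mod_lt _ (by omega)
  have hzd := Nat.mod_add_div R (2*m+3)
  generalize R % (2*m+3) = z at *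
  generalize R / (2*m+3) = Q at *
  have hQ : 5 * (2*m+3)^2 ≤ 2 * Q + 3 := by
    have : (2*m+3) * (5 * (2*m+3)^2) ≤ (2*m+3) * (2 * Q + 3) := by nlinarith
    exact Nat.le_of_mul_le_mul_left this (by omega)
  clear hRb
  obtain ⟨S, hS⟩ : ∃ S, Q = S + 2 * z := ⟨Q - 2*z, by
    have : 2 * z ≤ Q := by
      by_contra! hlt
      nlinarith
    omega⟩
  subst hS
  have hym : S % (m+1) < m+1 := Nat.mod_lt _ (by omega)
  have hyd := Nat.mod_add_div S (m+1)
  have hSb : (m+1) * (3*m+2) + m ≤ S := by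
    by_contra! hlt
    nlinarith
  generalize S % (m+1) = y at *
  generalize S / (m+1) = k at *
  refine ⟨k, y, z, ?_, ?_⟩
  · have : 3 * m + 2 ≤ k := by
      by_contra! hlt
      nlinarith
    omega
  · rw [← hzd, ← hyd]; ring


lemma numer (c t : ℕ) (hc : 3 ≤ c) (ht : 3 * c ^ 3 ≤ t) : ∃ x y z : ℕ,
    t = (c.choose 3 + x * c.choose 2) + ((c+1).choose 3 + y * (c+1).choose 2)
      + ((c+2).choose 3 + z * (c+2).choose 2) := by
  have p2 : ∀ n : ℕ, 2 * (n+1).choose 2 = (n+1) * n := by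
    intro n; rw [Nat.choose_two_right, Nat.add_sub_cancel, mul_comm 2]
    exact Nat.div_mul_cancel (by rw [mul_comm]; exact (Nat.even_mul_succ_self n).two_dvd)
  have p3 : ∀ n : ℕ, 6 * (n+2).choose 3 = (n+2) * (n+1) * n := by
    intro n
    have h := Nat.add_one_mul_choose_eq (n+1) 2
    have h2 := p2 n
    have : (n+1+1) = n+2 := rfl
    rw [this] at h
    calc 6 * (n+2).choose 3 = 2 * ((n+2).choose (2+1) * (2+1)) := by ring
      _ = (n+2) * (2 * (n+1).choose 2) := by rw [← h]; ring
      _ = _ := by rw [h2]; ring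
  obtain ⟨d, rfl⟩ : ∃ d, c = d + 2 := ⟨c - 2, by omega⟩
  have a1 := p2 (d+1); have a2 := p2 (d+2); have a3 := p2 (d+3)
  have b1 := p3 d; have b2 := p3 (d+1); have b3 := p3 (d+2)
  simp only [Nat.add_assoc, Nat.reduceAdd] at *
  generalize (d+2).choose 2 = A1 at *
  generalize (d+3).choose 2 = A2 at *
  generalize (d+4).choose 2 = A3 at *
  generalize (d+2).choose 3 = B1 at *
  generalize (d+3).choose 3 = B2 at *
  generalize (d+4).choose 3 = B3 at *
  have hB : 2 * (B1 + B2 + B3) = (d+2)^3 + (d+2) := by nlinarith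
  obtain ⟨R, hR⟩ : ∃ R, t = B1 + B2 + B3 + R := ⟨t - (B1+B2+B3), by
    have : B1 + B2 + B3 ≤ t := by nlinarith [sq_nonneg d]
    omega⟩
  have hRb : 5 * (d+2)^3 ≤ 2 * R + (d+2) := by nlinarith
  suffices h : ∃ x y z, R = x * A1 + y * A2 + z * A3 by
    obtain ⟨x, y, z, h⟩ := h
    exact ⟨x, y, z, by rw [hR, h]; ring⟩
  suffices h : ∃ k y z, y + z ≤ k ∧ R = k * A1 + y * (d+2) + z * (2*d+5) by
    obtain ⟨k, y, z, hk, h⟩ := h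
    obtain ⟨x, rfl⟩ := Nat.exists_eq_add_of_le' hk
    refine ⟨x, y, z, ?_⟩
    have e2 : A2 = A1 + (d+2) := by nlinarith
    have e3 : A3 = A1 + (2*d+5) := by nlinarith
    rw [h, e2, e3]; ring
  rcases Nat.even_or_odd' d with ⟨m, rfl | rfl⟩
  · obtain ⟨k, y, z, h1, h2⟩ := numer_even m R (by
      have : (2*m+2)^3 = 8 * (m+1)^3 := by ring
      omega)
    have eA : A1 = (m+1) * (2*m+1) := by
      have : (2*m+2) * (2*m+1) = 2 * ((m+1) * (2*m+1)) := by ring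
      omega
    exact ⟨k, y, z, h1, by rw [h2, eA]; ring⟩
  · obtain ⟨k, y, z, h1, h2⟩ := numer_odd m R (by
      have : (2*m+1+2) = 2*m+3 := rfl
      rwa [this] at hRb)
    have eA : A1 = (2*m+3) * (m+1) := by
      have : (2*m+1+2) * (2*m+1+1) = 2 * ((2*m+3) * (m+1)) := by ring
      omega
    exact ⟨k, y, z, h1, by rw [h2, eA]; ring⟩


section Spec
variable {m n : Type*} [Fintype m] [Fintype n] (A : Matrix m n ℝ)

lemma psd_tm : (Aᵀ * A).PosSemidef := by
  have := Matrix.posSemidef_conjTranspose_mul_self A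
  rwa [Matrix.conjTranspose_eq_transpose_of_trivial] at this

lemma eig_mem [DecidableEq n] (i : n) (hi : (psd_tm A).1.eigenvalues i ≠ 0) :
    (psd_tm A).1.eigenvalues i ∈
      {μ : ℝ | 0 < μ ∧ ∃ v : n → ℝ, v ≠ 0 ∧ (Aᵀ * A).mulVec v = μ • v} := by
  refine ⟨lt_of_le_of_ne ((psd_tm A).eigenvalues_nonneg i) hi.symm,
    ((psd_tm A).1.eigenvectorBasis i).ofLp, ?_, (psd_tm A).1.mulVec_eigenvectorBasis i⟩
  intro h
  have h1 := (psd_tm A).1.eigenvectorBasis.orthonormal.ne_zero i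
  exact h1 (by ext j; exact congrFun h j)

lemma spec_nonempty (h : (Aᵀ * A).trace ≠ 0) :
    {μ : ℝ | 0 < μ ∧ ∃ v : n → ℝ, v ≠ 0 ∧ (Aᵀ * A).mulVec v = μ • v}.Nonempty := by
  classical
  by_contra hne
  apply h
  rw [(psd_tm A).1.trace_eq_sum_eigenvalues]
  refine Finset.sum_eq_zero fun i _ => ?_
  by_contra hi
  exact hne ⟨_, eig_mem A i (by simpa using hi)⟩

lemma spec_le : lambdaMinPos (Aᵀ * A) * A.rank ≤ (Aᵀ * A).trace := by
  classical
  have hbdd : BddBelow {μ : ℝ | 0 < μ ∧ ∃ v : n → ℝ, v ≠ 0 ∧ (Aᵀ * A).mulVec v = μ • v} :=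
    ⟨0, fun μ h => h.1.le⟩
  rw [← Matrix.rank_transpose_mul_self, (psd_tm A).1.rank_eq_card_non_zero_eigs,
    (psd_tm A).1.trace_eq_sum_eigenvalues, Fintype.card_subtype]
  rw [mul_comm, ← nsmul_eq_mul]
  refine le_trans (Finset.card_nsmul_le_sum _ (fun i => (psd_tm A).1.eigenvalues i) _ ?_)
    (Finset.sum_le_sum_of_subset_of_nonneg (Finset.filter_subset _ _)
      fun i _ _ => (psd_tm A).eigenvalues_nonneg i)
  intro i hi
  exact csInf_le hbdd (eig_mem A i (Finset.mem_filter.mp hi).2)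

lemma rank_ge (h1 : ∀ i, (Finset.univ.filter fun j => A i j ≠ 0).card ≤ 3)
    (h2 : ∀ j, ∃ i, A i j ≠ 0) : Fintype.card n ≤ 3 * A.rank := by
  classical
  obtain ⟨b, hb, hspan, hli⟩ := exists_linearIndependent ℝ (Set.range A.row)
  have hfin : b.Finite := (Set.finite_range A.row).subset hb
  have : Fintype b := hfin.fintype
  have hr : A.rank = b.toFinset.card := by
    rw [Matrix.rank_eq_finrank_span_row, ← hspan]
    exact finrank_span_set_eq_card hli
  have hcov : (Finset.univ : Finset n) ⊆
      b.toFinset.biUnion fun r => Finset.univ.filter fun j => r j ≠ 0 := by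
    intro j _
    by_contra hj
    have hz : ∀ r ∈ b, r j = 0 := by
      intro r hr
      by_contra hne
      exact hj (Finset.mem_biUnion.mpr ⟨r, by simpa using hr, by simpa using hne⟩)
    obtain ⟨i, hi⟩ := h2 j
    have hmem : A.row i ∈ Submodule.span ℝ b := by
      rw [hspan]; exact Submodule.subset_span ⟨i, rfl⟩
    have hle : Submodule.span ℝ b ≤ LinearMap.ker (LinearMap.proj (R := ℝ) (φ := fun _ : n => ℝ) j) :=
      Submodule.span_le.mpr fun r hr => by simpa using hz r hr
    exact hi (by simpa using hle hmem)
  calc Fintype.card n = (Finset.univ : Finset n).card := rfl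
    _ ≤ _ := Finset.card_le_card hcov
    _ ≤ b.toFinset.card * 3 := Finset.card_biUnion_le_card_mul _ _ _ (by
        intro r hr
        obtain ⟨i, rfl⟩ := hb (by simpa using hr : r ∈ b)
        exact h1 i)
    _ = _ := by rw [hr, mul_comm]

end Spec

lemma triSign_sq (T e : Finset ℕ) (hT : T.card = 3) :
    triSign T e * triSign T e = if e ∈ T.powersetCard 2 then 1 else 0 := by
  unfold triSign
  simp only [Finset.mem_powersetCard, hT, and_true]
  split_ifs <;> norm_num

lemma triSign_ne {T e : Finset ℕ} (hT : T.card = 3) :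
    triSign T e ≠ 0 ↔ e ∈ T.powersetCard 2 := by
  have := triSign_sq T e hT
  constructor
  · intro h
    by_contra h'
    rw [if_neg h'] at this
    exact h (mul_self_eq_zero.mp this)
  · intro h h'
    rw [if_pos h, h'] at this
    norm_num at this

lemma powersetCard_sub_edges {F : Finset (Finset ℕ)} {T : Finset ℕ} (hT : T ∈ F) :
    T.powersetCard 2 ⊆ edgesOf F := fun e he =>
  Finset.mem_biUnion.mpr ⟨T, hT, he⟩

lemma trace_eq {F : Finset (Finset ℕ)} (hF : IsTriFam F) :
    ((delta1 F)ᵀ * delta1 F).trace = 3 * F.card := by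
  simp only [Matrix.trace, Matrix.diag, Matrix.mul_apply, Matrix.transpose_apply, delta1,
    Matrix.of_apply]
  rw [Finset.sum_comm]
  have : ∀ T : {T // T ∈ F}, ∑ e : {f // f ∈ edgesOf F}, triSign T.1 e.1 * triSign T.1 e.1 = 3 := by
    intro T
    rw [Finset.univ_eq_attach, Finset.sum_attach (edgesOf F) (fun e => triSign T.1 e * triSign T.1 e)]
    simp_rw [triSign_sq T.1 _ (hF.2 T.1 T.2)]
    rw [Finset.sum_ite_mem, Finset.inter_eq_right.mpr (powersetCard_sub_edges T.2),
      Finset.sum_const, Finset.card_powersetCard, hF.2 T.1 T.2]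
    norm_num [Nat.choose]
  rw [Finset.sum_congr rfl fun T _ => this T]
  simp [mul_comm]

lemma lam_mul_edges {F : Finset (Finset ℕ)} (hF : IsTriFam F) :
    lam F * (edgesOf F).card ≤ 9 * F.card := by
  have h1 := spec_le (delta1 F)
  rw [trace_eq hF] at h1
  have h2 : Fintype.card {e // e ∈ edgesOf F} ≤ 3 * (delta1 F).rank := by
    refine rank_ge _ ?_ ?_
    · intro T
      have hc := hF.2 T.1 T.2
      calc _ ≤ (T.1.powersetCard 2).card := by
            refine Finset.card_le_card_of_injOn Subtype.val ?_ Subtype.val_injective.injOn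
            intro e he
            have he' : triSign T.1 e.1 ≠ 0 := (Finset.mem_filter.mp he).2
            exact (triSign_ne hc).mp he'
        _ = 3 := by rw [Finset.card_powersetCard, hc]; rfl
    · intro e
      obtain ⟨T, hT, he⟩ := Finset.mem_biUnion.mp e.2
      exact ⟨⟨T, hT⟩, by simpa [delta1] using (triSign_ne (hF.2 T hT)).mpr he⟩
  rw [Fintype.card_coe] at h2
  have h0 : 0 ≤ lam F := Real.sInf_nonneg fun μ h => h.1.le
  have h2' : ((edgesOf F).card : ℝ) ≤ 3 * (delta1 F).rank := by exact_mod_cast h2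
  have h1' : lam F * (delta1 F).rank ≤ 3 * F.card := h1
  nlinarith [mul_le_mul_of_nonneg_left h2' h0]


lemma card_cube {F : Finset (Finset ℕ)} (hF : IsTriFam F) :
    (F.card : ℝ) ≤ Real.sqrt (edgesOf F).card * (edgesOf F).card := by
  set E := edgesOf F with hE
  set V := vertsOf F with hV
  have key : ∀ x ∈ V, ((F.filter fun T => x ∈ T).card : ℝ) ≤
      Real.sqrt E.card * (E.filter fun e => x ∈ e).card := by
    intro x _
    have a1 : (F.filter fun T => x ∈ T).card ≤ E.card := by
      refine Finset.card_le_card_of_injOn (fun T => T.erase x) ?_ ?_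
      · intro T hT
        obtain ⟨hT1, hT2⟩ := Finset.mem_filter.mp hT
        refine mem_edgesOf.mpr ⟨T, hT1, Finset.erase_subset _ _, ?_⟩
        rw [Finset.card_erase_of_mem hT2, hF.2 T hT1]
      · intro T hT U hU h
        have hT2 := (Finset.mem_filter.mp hT).2
        have hU2 := (Finset.mem_filter.mp hU).2
        rw [← Finset.insert_erase hT2, ← Finset.insert_erase hU2]
        simp only at h
        rw [h]
    have a2 : (F.filter fun T => x ∈ T).card ≤ (E.filter fun e => x ∈ e).card ^ 2 := by
      rw [sq, ← Finset.card_product]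
      have hex : ∀ T ∈ F.filter fun T => x ∈ T, ∃ p : Finset ℕ × Finset ℕ,
          p ∈ (E.filter fun e => x ∈ e) ×ˢ (E.filter fun e => x ∈ e) ∧ p.1 ∪ p.2 = T := by
        intro T hT
        obtain ⟨hT1, hT2⟩ := Finset.mem_filter.mp hT
        have hc : (T.erase x).card = 2 := by
          rw [Finset.card_erase_of_mem hT2, hF.2 T hT1]
        obtain ⟨y, z, hyz, h⟩ := Finset.card_eq_two.mp hc
        have hy : y ∈ T.erase x := by rw [h]; simp
        have hz : z ∈ T.erase x := by rw [h]; simp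
        rw [Finset.mem_erase] at hy hz
        refine ⟨({x, y}, {x, z}), ?_, ?_⟩
        · simp only [Finset.mem_product, Finset.mem_filter, Finset.mem_insert, true_or, and_true]
          refine ⟨mem_edgesOf.mpr ⟨T, hT1, ?_, Finset.card_pair hy.1.symm⟩,
            mem_edgesOf.mpr ⟨T, hT1, ?_, Finset.card_pair hz.1.symm⟩⟩
          · intro a ha
            simp only [Finset.mem_insert, Finset.mem_singleton] at ha
            rcases ha with rfl | rfl
            exacts [hT2, hy.2]
          · intro a ha
            simp only [Finset.mem_insert, Finset.mem_singleton] at ha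
            rcases ha with rfl | rfl
            exacts [hT2, hz.2]
        · rw [← Finset.insert_erase hT2, h]
          ext a; simp only [Finset.mem_union, Finset.mem_insert, Finset.mem_singleton]; tauto
      choose! f hf1 hf2 using hex
      refine Finset.card_le_card_of_injOn f hf1 ?_
      intro T hT U hU h
      rw [← hf2 T hT, ← hf2 U hU, h]
    have b1 : ((F.filter fun T => x ∈ T).card : ℝ) ≤ E.card := by exact_mod_cast a1
    have b2 : ((F.filter fun T => x ∈ T).card : ℝ) ≤ ((E.filter fun e => x ∈ e).card : ℝ) ^ 2 := by
      exact_mod_cast a2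
    refine le_of_pow_le_pow_left₀ (n := 2) (by norm_num) (by positivity) ?_
    rw [mul_pow, Real.sq_sqrt (Nat.cast_nonneg _), sq]
    exact mul_le_mul b1 b2 (Nat.cast_nonneg _) (Nat.cast_nonneg _)
  have s1 : ∑ x ∈ V, (F.filter fun T => x ∈ T).card = 3 * F.card := by
    have := Finset.sum_card_bipartiteAbove_eq_sum_card_bipartiteBelow (s := V) (t := F)
      (fun x T => x ∈ T)
    simp only [Finset.bipartiteAbove, Finset.bipartiteBelow] at this
    rw [this, mul_comm, ← smul_eq_mul, ← Finset.sum_const]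
    refine Finset.sum_congr rfl fun T hT => ?_
    rw [Finset.filter_mem_eq_inter, Finset.inter_eq_right.mpr, hF.2 T hT]
    intro a ha
    exact Finset.mem_biUnion.mpr ⟨T, hT, ha⟩
  have s2 : ∑ x ∈ V, (E.filter fun e => x ∈ e).card = 2 * E.card := by
    have := Finset.sum_card_bipartiteAbove_eq_sum_card_bipartiteBelow (s := V) (t := E)
      (fun x T => x ∈ T)
    simp only [Finset.bipartiteAbove, Finset.bipartiteBelow] at this
    rw [this, mul_comm, ← smul_eq_mul, ← Finset.sum_const]
    refine Finset.sum_congr rfl fun e he => ?_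
    obtain ⟨T, hT, h1, h2⟩ := mem_edgesOf.mp he
    rw [Finset.filter_mem_eq_inter, Finset.inter_eq_right.mpr, h2]
    intro a ha
    exact Finset.mem_biUnion.mpr ⟨T, hT, h1 ha⟩
  have hs := Finset.sum_le_sum key
  rw [← Finset.mul_sum, ← Nat.cast_sum, ← Nat.cast_sum, s1, s2] at hs
  push_cast at hs
  have : (0:ℝ) ≤ Real.sqrt E.card * E.card := by positivity
  have h4 : (0:ℝ) ≤ F.card := Nat.cast_nonneg _
  linarith

lemma lam_le {F : Finset (Finset ℕ)} (hF : IsTriFam F) :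
    lam F ≤ 9 * (F.card : ℝ) ^ ((1 : ℝ) / 3) := by
  have h1 := lam_mul_edges hF
  have h2 := card_cube hF
  have h0 : 0 ≤ lam F := Real.sInf_nonneg fun μ h => h.1.le
  have ht : (0 : ℝ) < F.card := by exact_mod_cast Finset.card_pos.mpr hF.1
  have hm : (0 : ℝ) ≤ (edgesOf F).card := Nat.cast_nonneg _
  generalize ((edgesOf F).card : ℝ) = e at *
  generalize (F.card : ℝ) = t at *
  generalize lam F = l at *
  have hr : (t ^ ((1 : ℝ) / 3)) ^ 3 = t := by
    rw [← Real.rpow_natCast, ← Real.rpow_mul ht.le]; norm_num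
  have hr0 : 0 ≤ t ^ ((1 : ℝ) / 3) := Real.rpow_nonneg ht.le _
  have h3 : t ^ 2 ≤ e ^ 3 := by
    calc t ^ 2 ≤ (Real.sqrt e * e) ^ 2 := by gcongr
      _ = e ^ 3 := by rw [mul_pow, Real.sq_sqrt hm]; ring
  have h4 : (l * e) ^ 3 ≤ (9 * t) ^ 3 := by gcongr
  have h5 : l ^ 3 ≤ (9 * t ^ ((1 : ℝ) / 3)) ^ 3 := by
    rw [mul_pow, hr]
    have : l ^ 3 * t ^ 2 ≤ (9 ^ 3 * t) * t ^ 2 := by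
      calc l ^ 3 * t ^ 2 ≤ l ^ 3 * e ^ 3 := by gcongr
        _ = (l * e) ^ 3 := by ring
        _ ≤ _ := h4
        _ = _ := by ring
    exact le_of_mul_le_mul_right this (by positivity)
  exact le_of_pow_le_pow_left₀ (by norm_num) (by positivity) h5


def sg (x y : ℕ) : ℝ := if x < y then 1 else -1

lemma sg_sq (x y : ℕ) : sg x y * sg x y = 1 := by
  unfold sg; split_ifs <;> norm_num

lemma sg_swap {x y : ℕ} (h : x ≠ y) : sg y x = - sg x y := by
  unfold sg; split_ifs <;> first | omega | norm_num

lemma triSign_eq {x y z : ℕ} (hxy : x ≠ y) (hxz : x ≠ z) (hyz : y ≠ z) :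
    triSign {x, y, z} {x, y} = - (sg y z * sg z x) := by
  have hs : ({x, y, z} : Finset ℕ) \ {x, y} = {z} := by
    ext a; simp only [Finset.mem_sdiff, Finset.mem_insert, Finset.mem_singleton]
    constructor
    · tauto
    · rintro rfl; simp [hxz.symm, hyz.symm]
  have hsub : ({x, y} : Finset ℕ) ⊆ {x, y, z} := by intro a; simp; tauto
  have hc3 : ({x, y, z} : Finset ℕ).card = 3 :=
    Finset.card_eq_three.mpr ⟨x, y, z, hxy, hxz, hyz, rfl⟩
  unfold triSign
  rw [if_pos ⟨hsub, Finset.card_pair hxy, hc3⟩, hs]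
  have hmax : (({z} : Finset ℕ).max = ({x, y, z} : Finset ℕ).max) ↔ x < z ∧ y < z := by
    rw [Finset.max_singleton, Finset.max_insert, Finset.max_insert, Finset.max_singleton,
      ← WithBot.coe_max, ← WithBot.coe_max, WithBot.coe_inj]
    omega
  have hmin : (({z} : Finset ℕ).min = ({x, y, z} : Finset ℕ).min) ↔ z < x ∧ z < y := by
    rw [Finset.min_singleton, Finset.min_insert, Finset.min_insert, Finset.min_singleton,
      ← WithTop.coe_min, ← WithTop.coe_min, WithTop.coe_inj]
    omega
  simp only [hmax, hmin]
  unfold sg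
  split_ifs <;> first | omega | norm_num

lemma tri_term (V : Finset ℕ → ℝ) {x y z : ℕ} (hxy : x ≠ y) (hxz : x ≠ z) (hyz : y ≠ z) :
    triSign {x, y, z} {x, y} *
      ∑ f ∈ ({x, y, z} : Finset ℕ).powersetCard 2, triSign {x, y, z} f * V f =
    sg x y * (sg x y * V {x, y} + sg y z * V {y, z} + sg z x * V {z, x}) := by
  have hp : ({x, y, z} : Finset ℕ).powersetCard 2 = {{x, y}, {y, z}, {z, x}} := by
    symm
    apply Finset.eq_of_subset_of_card_le
    · intro f hf
      simp only [Finset.mem_insert, Finset.mem_singleton] at hf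
      rw [Finset.mem_powersetCard]
      rcases hf with rfl | rfl | rfl
      · exact ⟨by intro a; simp; tauto, Finset.card_pair hxy⟩
      · exact ⟨by intro a; simp; tauto, Finset.card_pair hyz⟩
      · exact ⟨by intro a; simp; tauto, Finset.card_pair hxz.symm⟩
    · rw [Finset.card_powersetCard, Finset.card_eq_three.mpr ⟨x, y, z, hxy, hxz, hyz, rfl⟩]
      refine le_of_eq (Finset.card_eq_three.mpr ⟨_, _, _, ?_, ?_, ?_, rfl⟩).symm
      · intro h
        have : x ∈ ({y, z} : Finset ℕ) := h ▸ (by simp)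
        simp at this; tauto
      · intro h
        have : y ∈ ({z, x} : Finset ℕ) := h ▸ (by simp)
        simp at this; rcases this with h | h
        exacts [hyz h, hxy h.symm]
      · intro h
        have : y ∈ ({z, x} : Finset ℕ) := h ▸ (by simp)
        simp at this; rcases this with h | h
        exacts [hyz h, hxy h.symm]
  have n1 : ({x, y} : Finset ℕ) ∉ ({{y, z}, {z, x}} : Finset (Finset ℕ)) := by
    simp only [Finset.mem_insert, Finset.mem_singleton, not_or]
    constructor
    · intro h
      have : x ∈ ({y, z} : Finset ℕ) := h ▸ (by simp)
      simp at this; tauto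
    · intro h
      have : y ∈ ({z, x} : Finset ℕ) := h ▸ (by simp)
      simp at this; rcases this with h | h
      exacts [hyz h, hxy h.symm]
  have n2 : ({y, z} : Finset ℕ) ∉ ({{z, x}} : Finset (Finset ℕ)) := by
    simp only [Finset.mem_singleton]
    intro h
    have : y ∈ ({z, x} : Finset ℕ) := h ▸ (by simp)
    simp at this; rcases this with h | h
    exacts [hyz h, hxy h.symm]
  have r1 : ({x, y, z} : Finset ℕ) = {y, z, x} := by ext a; simp; tauto
  have r2 : ({x, y, z} : Finset ℕ) = {z, x, y} := by ext a; simp; tauto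
  have t1 := triSign_eq hxy hxz hyz
  have t2 : triSign {x, y, z} {y, z} = _ := r1 ▸ triSign_eq hyz hxy.symm hxz.symm
  have t3 : triSign {x, y, z} {z, x} = _ := r2 ▸ triSign_eq hxz.symm hyz.symm hxy
  rw [hp, Finset.sum_insert n1, Finset.sum_insert n2, Finset.sum_singleton, t1, t2, t3]
  have p := sg_sq x y
  have q := sg_sq y z
  have r := sg_sq z x
  linear_combination (V {x, y} * sg y z * sg y z) * r + V {x, y} * q - V {x, y} * p +
    (V {y, z} * sg y z * sg x y) * r + (V {z, x} * sg z x * sg x y) * q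

lemma lam_ge {c : ℝ} {F : Finset (Finset ℕ)} (hF : IsTriFam F) (hG : Good c F) : c ≤ lam F := by
  have hne := spec_nonempty (delta1 F) (by
    rw [trace_eq hF]
    have : (0 : ℝ) < F.card := by exact_mod_cast Finset.card_pos.mpr hF.1
    positivity)
  refine le_csInf hne ?_
  rintro μ ⟨hμ, v, hv, heq⟩
  set V : Finset ℕ → ℝ := fun e => if h : e ∈ edgesOf F then v ⟨e, h⟩ else 0 with hV
  have hVv : ∀ e : {e // e ∈ edgesOf F}, V e.1 = v e := fun e => by simp [hV]
  have hVe : ∀ e ∈ edgesOf F, ∑ T ∈ F, triSign T e *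
      ∑ f ∈ T.powersetCard 2, triSign T f * V f = μ * V e := by
    intro e he
    have h1 := congrFun heq ⟨e, he⟩
    rw [← Matrix.mulVec_mulVec] at h1
    simp only [Matrix.mulVec, dotProduct, Matrix.transpose_apply, delta1, Matrix.of_apply,
      Pi.smul_apply, smul_eq_mul] at h1
    rw [hVv ⟨e, he⟩, ← h1, ← Finset.sum_attach, ← Finset.univ_eq_attach]
    refine Finset.sum_congr rfl fun T _ => ?_
    congr 1
    rw [Finset.sum_subset (powersetCard_sub_edges T.2)]
    · rw [← Finset.sum_attach, ← Finset.univ_eq_attach]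
      exact Finset.sum_congr rfl fun f _ => by rw [hVv f]
    · intro f _ hf
      have : triSign T.1 f = 0 := by
        by_contra h
        exact hf ((triSign_ne (hF.2 T.1 T.2)).mp h)
      rw [this, zero_mul]
  have hV0 : ∀ x, V {x, x} = 0 := by
    intro x
    have : ({x, x} : Finset ℕ) ∉ edgesOf F := by
      intro h
      obtain ⟨T, -, -, h2⟩ := mem_edgesOf.mp h
      simp at h2
    simp only [hV, dif_neg this]
  refine hG μ hμ (fun x y => sg x y * V {x, y}) ?_ ?_ ?_
  · intro x y
    rcases eq_or_ne x y with rfl | hxy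
    · rw [hV0]; ring
    · rw [sg_swap hxy, Finset.pair_comm y x]; ring
  · intro x y hxy he
    have h1 := hVe _ he
    have h2 : ∑ T ∈ F, triSign T {x, y} * ∑ f ∈ T.powersetCard 2, triSign T f * V f =
        ∑ z ∈ link F x y, sg x y * (sg x y * V {x, y} + sg y z * V {y, z} + sg z x * V {z, x}) := by
      have hinj : Set.InjOn (fun z : ℕ => ({x, y, z} : Finset ℕ)) (link F x y) := by
        intro z hz z' hz' h
        have hz := mem_link.mp hz
        have : z ∈ ({x, y, z'} : Finset ℕ) := by
          simp only at h
          rw [← h]; simp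
        simp only [Finset.mem_insert, Finset.mem_singleton] at this
        tauto
      have hsub : (link F x y).image (fun z : ℕ => ({x, y, z} : Finset ℕ)) ⊆ F := by
        intro T hT
        obtain ⟨z, hz, rfl⟩ := Finset.mem_image.mp hT
        exact (mem_link.mp hz).2.2
      rw [← Finset.sum_subset hsub, Finset.sum_image hinj]
      · refine Finset.sum_congr rfl fun z hz => ?_
        have hz := mem_link.mp hz
        exact tri_term V hxy hz.1.symm hz.2.1.symm
      · intro T hT hT'
        have : triSign T {x, y} = 0 := by
          by_contra h
          have hc := hF.2 T hT
          obtain ⟨hs, -⟩ := Finset.mem_powersetCard.mp ((triSign_ne hc).mp h)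
          have hd : (T \ {x, y}).card = 1 := by
            rw [Finset.card_sdiff_of_subset hs, hc, Finset.card_pair hxy]
          obtain ⟨z, hz⟩ := Finset.card_eq_one.mp hd
          have hzm : z ∈ T \ {x, y} := by rw [hz]; simp
          simp only [Finset.mem_sdiff, Finset.mem_insert, Finset.mem_singleton, not_or] at hzm
          have hTe : ({x, y, z} : Finset ℕ) = T := by
            rw [← Finset.sdiff_union_of_subset hs, hz]
            ext a; simp only [Finset.mem_union, Finset.mem_insert, Finset.mem_singleton]; tauto
          exact hT' (Finset.mem_image.mpr
            ⟨z, mem_link.mpr ⟨hzm.2.1, hzm.2.2, hTe ▸ hT⟩, hTe⟩)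
        rw [this, zero_mul]
    rw [h2, ← Finset.mul_sum] at h1
    have h3 : sg x y * (sg x y * ∑ z ∈ link F x y,
        (sg x y * V {x, y} + sg y z * V {y, z} + sg z x * V {z, x})) =
        sg x y * (μ * V {x, y}) := by rw [h1]
    rw [← mul_assoc, sg_sq, one_mul] at h3
    rw [h3]; ring
  · obtain ⟨e, he⟩ := Function.ne_iff.mp hv
    obtain ⟨T, hT, h1, h2⟩ := mem_edgesOf.mp e.2
    obtain ⟨x, y, hxy, hexy⟩ := Finset.card_eq_two.mp h2
    refine ⟨x, y, hxy, hexy ▸ e.2, ?_⟩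
    have hs : sg x y ≠ 0 := by
      intro h
      have := sg_sq x y
      rw [h] at this; norm_num at this
    have : V {x, y} ≠ 0 := by rw [← hexy, hVv]; exact he
    exact mul_ne_zero hs this


lemma phi_bdd (t : ℕ) :
    BddAbove {r : ℝ | ∃ F : Finset (Finset ℕ), IsTriFam F ∧ F.card = t ∧ lam F = r} := by
  refine ⟨9 * (t : ℝ) ^ ((1 : ℝ) / 3), ?_⟩
  rintro r ⟨F, hF, rfl, rfl⟩
  exact lam_le hF

lemma phi_le (t : ℕ) : phi t ≤ 9 * (t : ℝ) ^ ((1 : ℝ) / 3) := by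
  refine Real.sSup_le ?_ (by positivity)
  rintro r ⟨F, hF, rfl, rfl⟩
  exact lam_le hF

lemma le_phi {c t : ℕ} (hc : 3 ≤ c) (ht : 3 * c ^ 3 ≤ t) : (c : ℝ) ≤ phi t := by
  obtain ⟨x, y, z, h⟩ := numer c t hc ht
  have hR : Rz c t := by
    rw [h]
    exact ((Rz_blk hc le_rfl x).add (Rz_blk (by omega) (by omega) y)).add
      (Rz_blk (by omega) (by omega) z)
  obtain ⟨F, h1, h2, h3, -⟩ := hR 0
  exact (lam_ge h1 h3).trans (le_csSup (phi_bdd t) ⟨F, h1, h2, rfl⟩)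

lemma phi_lower (t : ℕ) (ht : 81 ≤ t) :
    ((⌊((t : ℝ) / 3) ^ ((1 : ℝ) / 3)⌋ : ℝ) ≤ phi t ∧
        (1 / 2) * ((t : ℝ) / 3) ^ ((1 : ℝ) / 3) ≤ phi t) := by
  have htr : (81 : ℝ) ≤ t := by exact_mod_cast ht
  have h0 : (0 : ℝ) ≤ (t : ℝ) / 3 := by positivity
  set u := ((t : ℝ) / 3) ^ ((1 : ℝ) / 3) with hu
  have hu3 : u ^ 3 = (t : ℝ) / 3 := by
    rw [hu, ← Real.rpow_natCast, ← Real.rpow_mul h0]; norm_num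
  have hu0 : 0 ≤ u := Real.rpow_nonneg h0 _
  have hu1 : 3 ≤ u := by
    refine le_of_pow_le_pow_left₀ (n := 3) (by norm_num) hu0 ?_
    rw [hu3]; linarith
  have hc : 3 ≤ ⌊u⌋₊ := Nat.le_floor (by exact_mod_cast hu1)
  have hle : (⌊u⌋₊ : ℝ) ≤ u := Nat.floor_le hu0
  have hphi : (⌊u⌋₊ : ℝ) ≤ phi t := by
    refine le_phi hc ?_
    have : (⌊u⌋₊ : ℝ) ^ 3 ≤ u ^ 3 := by gcongr
    have h3 : (3 : ℝ) * (⌊u⌋₊ : ℝ) ^ 3 ≤ t := by linarith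
    exact_mod_cast h3
  refine ⟨?_, ?_⟩
  · rw [← natCast_floor_eq_intCast_floor hu0]; exact hphi
  · have := Nat.lt_floor_add_one u
    linarith

/-- For every `t ≥ 81`, `φ(t) ≥ ⌊(t/3)^{1/3}⌋`, hence `φ(t) ≥ (1/2)(t/3)^{1/3}`;
moreover `φ(t) ≤ Λ(t)`, and `φ(t) = Θ(t^{1/3})`. -/
theorem stmt19 :
    (∀ t : ℕ, 81 ≤ t →
      ((⌊((t : ℝ) / 3) ^ ((1 : ℝ) / 3)⌋ : ℝ) ≤ phi t ∧
        (1 / 2) * ((t : ℝ) / 3) ^ ((1 : ℝ) / 3) ≤ phi t)) ∧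
    (∀ t : ℕ, 1 ≤ t → phi t ≤ Lam t) ∧
    (∃ c₁ c₂ : ℝ, 0 < c₁ ∧ 0 < c₂ ∧ ∃ N : ℕ, ∀ t : ℕ, N ≤ t →
      c₁ * (t : ℝ) ^ ((1 : ℝ) / 3) ≤ phi t ∧ phi t ≤ c₂ * (t : ℝ) ^ ((1 : ℝ) / 3)) := by
  refine ⟨phi_lower, ?_, ?_⟩
  · intro t ht
    refine le_csSup ?_ ⟨t, ht, le_rfl, rfl⟩
    have hfin : {r : ℝ | ∃ s : ℕ, 1 ≤ s ∧ s ≤ t ∧ phi s = r} ⊆ Set.image phi (Set.Iic t) := by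
      rintro r ⟨s, -, h2, h3⟩
      exact ⟨s, h2, h3⟩
    exact ((Set.finite_Iic t).image phi).bddAbove.mono hfin
  · refine ⟨(1 / 2) * (1 / 3 : ℝ) ^ ((1 : ℝ) / 3), 9, by positivity, by norm_num, 81, ?_⟩
    intro t ht
    refine ⟨?_, phi_le t⟩
    have h := (phi_lower t ht).2
    have e : ((t : ℝ) / 3) = (1 / 3) * t := by ring
    rw [e, Real.mul_rpow (by norm_num) (Nat.cast_nonneg t), ← mul_assoc] at h
    exact h
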